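/- arXiv:1710.07889 — 3 statements merged into one kernel-verified Lean document; each statement's English description precedes it below -/
import Mathlib

section
/- Let l and r be nonnegative integers and let α, β, γ be real numbers with γ < 1 − l, such that β + r + 1 and α are not nonpositive integers, β is not a nonpositive integer, 1 + β − γ is not a nonpositive integer, (α)_l ≠ 0, and (1+β−γ)_k ≠ 0, (1+β−α−l)_k ≠ 0 for 0 ≤ k ≤ r. Then ₃F₂(β, α+l, γ; β+r+1, α; 1) = (β)_{r+1} (α−β)_l Γ(1−γ) Γ(β) / ( (α)_l Γ(1+β−γ) · r! ) · ₃F₂(−r, β, 1+β−α; 1+β−γ, 1+β−α−l; 1), where the series on the right-hand side terminates after r+1 terms. -/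
open Finset

/-- Pochhammer symbol `(a)ₙ = a(a+1)⋯(a+n-1)` for natural `n`. -/
noncomputable def poch (a : ℝ) (n : ℕ) : ℝ := Polynomial.eval a (ascPochhammer ℝ n)

/-- Pochhammer symbol `(a)ₖ` for integer `k`: for `k ≥ 0` the ascending product,
and `(a)₋ₖ = (-1)ᵏ/(1-a)ₖ` for `k ≥ 0`. -/
noncomputable def pochZ (a : ℝ) (k : ℤ) : ℝ :=
  if 0 ≤ k then poch a k.toNat else (-1) ^ (-k).toNat / poch (1 - a) (-k).toNat

/-- The (generally non-terminating) Clausen series `₃F₂(a,b,c;d,e;1)`. -/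
noncomputable def F32 (a b c d e : ℝ) : ℝ :=
  ∑' n : ℕ, poch a n * poch b n * poch c n / (poch d n * poch e n * n.factorial)

/-- A terminating `₃F₂(a,b,c;d,e;1)` summed over `k = 0, …, N`. -/
noncomputable def F32sum (N : ℕ) (a b c d e : ℝ) : ℝ :=
  ∑ k ∈ Finset.range (N + 1),
    poch a k * poch b k * poch c k / (poch d k * poch e k * k.factorial)

/-- The Kummer confluent hypergeometric function `₁F₁(a;b;x)`. -/
noncomputable def F11 (a b x : ℝ) : ℝ :=
  ∑' n : ℕ, poch a n * x ^ n / (poch b n * n.factorial)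

lemma poch_zero (a : ℝ) : poch a 0 = 1 := by simp [poch]

lemma poch_succ (a : ℝ) (n : ℕ) : poch a (n + 1) = poch a n * (a + n) := by
  simp [poch, ascPochhammer_succ_eval]

lemma poch_succ_left (a : ℝ) (n : ℕ) : poch a (n + 1) = a * poch (a + 1) n := by
  induction n with
  | zero => simp [poch_succ, poch_zero]
  | succ n ih => rw [poch_succ, ih, poch_succ]; push_cast; ring

lemma poch_add (a : ℝ) (m n : ℕ) : poch a (m + n) = poch a m * poch (a + m) n := by
  induction n with
  | zero => simp [poch_zero]
  | succ n ih => rw [← add_assoc, poch_succ, ih, poch_succ]; push_cast; ring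

lemma poch_ne_zero (a : ℝ) (h : ∀ k : ℕ, a ≠ -(k : ℝ)) (n : ℕ) : poch a n ≠ 0 := by
  induction n with
  | zero => simp [poch_zero]
  | succ n ih =>
    rw [poch_succ]
    refine mul_ne_zero ih fun h' => h n (by linarith)

/-- the binomial coefficient `(γ)_n / n!` -/
noncomputable def tt (γ : ℝ) (n : ℕ) : ℝ := poch γ n / n.factorial

lemma tt_zero (γ : ℝ) : tt γ 0 = 1 := by simp [tt, poch_zero]

lemma tt_succ (γ : ℝ) (n : ℕ) : tt γ (n + 1) * (n + 1) = tt γ n * (γ + n) := by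
  have : (n.factorial : ℝ) ≠ 0 := by positivity
  simp only [tt, poch_succ, Nat.factorial_succ]
  push_cast
  field_simp

lemma tt_shift (γ : ℝ) (n : ℕ) : tt γ n * (γ + n) = γ * tt (γ + 1) n := by
  simp only [tt]
  have h := poch_succ γ n
  rw [poch_succ_left] at h
  rw [div_mul_eq_mul_div, ← h]; ring

lemma tt_bound (γ : ℝ) (hγ : γ < 1) :
    ∃ C : ℝ, ∀ n : ℕ, |tt γ n| ≤ C * ((n : ℝ) + 1) ^ (γ - 1) := by
  obtain ⟨N, hN⟩ := exists_nat_ge (-γ)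
  have key : ∀ n : ℕ, N ≤ n → |tt γ (n+1)| * ((n : ℝ) + 2) ^ (1 - γ)
      ≤ |tt γ n| * ((n : ℝ) + 1) ^ (1 - γ) := by
    intro n hn
    have hn' : (N : ℝ) ≤ n := by exact_mod_cast hn
    have hnpos : (0 : ℝ) < (n : ℝ) + 1 := by positivity
    have e : tt γ (n+1) = tt γ n * ((γ + n) / (n + 1)) := by
      have := tt_succ γ n
      field_simp
      linarith
    have hq : 0 ≤ (γ + n) / ((n : ℝ) + 1) := div_nonneg (by linarith) hnpos.le
    rw [e, abs_mul, abs_of_nonneg hq, mul_assoc]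
    refine mul_le_mul_of_nonneg_left ?_ (abs_nonneg _)
    have h2 : ((n : ℝ) + 2) = (n + 1) * (1 + 1 / (n + 1)) := by field_simp; ring
    rw [h2, Real.mul_rpow hnpos.le (by positivity)]
    have h3 : (γ + n) / ((n : ℝ) + 1) * (1 + 1 / ((n : ℝ) + 1)) ^ (1 - γ) ≤ 1 := by
      have hx : 0 < 1 / ((n : ℝ) + 1) := by positivity
      have a1 : (γ + n) / ((n : ℝ) + 1) ≤ Real.exp (-(1 - γ) * (1 / ((n : ℝ) + 1))) := by
        refine le_trans (le_of_eq ?_) (Real.add_one_le_exp _)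
        field_simp; ring
      have a2 : (1 + 1 / ((n : ℝ) + 1)) ^ (1 - γ) ≤ Real.exp ((1 - γ) * (1 / ((n : ℝ) + 1))) := by
        rw [mul_comm, Real.exp_mul]
        refine Real.rpow_le_rpow (by positivity) ?_ (by linarith)
        rw [add_comm]; exact Real.add_one_le_exp _
      calc _ ≤ Real.exp (-(1 - γ) * (1 / ((n : ℝ) + 1))) * Real.exp ((1 - γ) * (1 / ((n : ℝ) + 1))) :=
            mul_le_mul a1 a2 (by positivity) (by positivity)
        _ = 1 := by rw [← Real.exp_add, neg_mul, neg_add_cancel, Real.exp_zero]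
    calc _ = ((n : ℝ) + 1) ^ (1 - γ) * ((γ + n) / ((n : ℝ) + 1) * (1 + 1 / ((n : ℝ) + 1)) ^ (1 - γ)) := by ring
      _ ≤ ((n : ℝ) + 1) ^ (1 - γ) * 1 := mul_le_mul_of_nonneg_left h3 (by positivity)
      _ = _ := by ring
  have hB : ∃ C : ℝ, ∀ n : ℕ, |tt γ n| * ((n : ℝ) + 1) ^ (1 - γ) ≤ C := by
    refine ⟨∑ k ∈ range (N+1), |tt γ k| * ((k : ℝ) + 1) ^ (1 - γ), fun n => ?_⟩
    have small : ∀ n, n ≤ N → |tt γ n| * ((n : ℝ) + 1) ^ (1 - γ) ≤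
        ∑ k ∈ range (N+1), |tt γ k| * ((k : ℝ) + 1) ^ (1 - γ) := by
      intro n hn
      exact single_le_sum (f := fun k : ℕ => |tt γ k| * ((k : ℝ) + 1) ^ (1 - γ))
        (fun i _ => by positivity) (mem_range.2 (by omega))
    rcases le_total n N with h | h
    · exact small n h
    · induction n, h using Nat.le_induction with
      | base => exact small N le_rfl
      | succ n hn ih =>
        refine le_trans ?_ ih
        have := key n hn
        push_cast
        rw [add_assoc, one_add_one_eq_two]
        exact this
  obtain ⟨C, hC⟩ := hB
  refine ⟨C, fun n => ?_⟩
  have h := hC n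
  have hp : (0 : ℝ) < (n : ℝ) + 1 := by positivity
  rw [show γ - 1 = -(1 - γ) by ring, Real.rpow_neg hp.le, ← div_eq_mul_inv, le_div_iff₀ (by positivity)]
  exact h

lemma tendsto_succ_rpow (s : ℝ) (hs : s < 0) :
    Filter.Tendsto (fun n : ℕ => ((n : ℝ) + 1) ^ s) Filter.atTop (nhds 0) := by
  have h := (tendsto_rpow_neg_atTop (y := -s) (by linarith)).comp
    (Filter.tendsto_atTop_add_const_right _ (1 : ℝ) tendsto_natCast_atTop_atTop)
  simpa [Function.comp_def] using h

lemma summable_succ_rpow (s : ℝ) (hs : s < -1) :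
    Summable (fun n : ℕ => ((n : ℝ) + 1) ^ s) := by
  have h := (summable_nat_add_iff 1).2 (Real.summable_nat_rpow.2 hs)
  simpa using h

lemma tt_tendsto (γ : ℝ) (hγ : γ < 1) : Filter.Tendsto (tt γ) Filter.atTop (nhds 0) := by
  obtain ⟨C, hC⟩ := tt_bound γ hγ
  refine squeeze_zero_norm hC ?_
  simpa using (tendsto_succ_rpow (γ - 1) (by linarith)).const_mul C

lemma tt_hasSum (γ : ℝ) (hγ : γ < 0) : HasSum (tt γ) 0 := by
  have hs : Summable (tt γ) := by
    obtain ⟨C, hC⟩ := tt_bound γ (by linarith)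
    exact Summable.of_norm_bounded ((summable_succ_rpow (γ - 1) (by linarith)).mul_left C) hC
  have hp : ∀ n : ℕ, ∑ k ∈ range (n+1), tt γ k = tt (γ + 1) n := by
    intro n
    induction n with
    | zero => simp [tt_zero]
    | succ n ih =>
      rw [sum_range_succ, ih]
      have h1 := tt_shift γ n
      have h2 := tt_succ γ n
      have h3 := tt_succ (γ + 1) n
      have hp : (0 : ℝ) < (n : ℝ) + 1 := by positivity
      apply mul_right_cancel₀ hp.ne'
      rw [h3, add_mul, h2, h1]; ring
  have h1 := (Filter.tendsto_add_atTop_iff_nat 1).2 hs.hasSum.tendsto_sum_nat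
  have h2 : Filter.Tendsto (fun n => ∑ k ∈ range (n+1), tt γ k) Filter.atTop (nhds 0) := by
    rw [funext hp]; exact tt_tendsto _ (by linarith)
  have := tendsto_nhds_unique h1 h2
  rw [← this]; exact hs.hasSum

lemma lemQ (l : ℕ) : ∀ (γ α : ℝ), γ < -(l : ℝ) → HasSum (fun n => tt γ n * poch (α + n) l) 0 := by
  induction l with
  | zero => intro γ α h; simpa [poch_zero] using tt_hasSum γ (by simpa using h)
  | succ l ih =>
    intro γ α h
    push_cast at h
    have h1 := (ih (γ + 1) α (by linarith)).mul_left γ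
    have h2 := (ih γ α (by linarith)).mul_left (α + l - γ)
    have h3 := h1.add h2
    simp only [mul_zero, add_zero] at h3
    have e : (fun n : ℕ => tt γ n * poch (α + n) (l + 1)) = fun n : ℕ =>
        γ * (tt (γ + 1) n * poch (α + n) l) + (α + l - γ) * (tt γ n * poch (α + n) l) := by
      ext n
      rw [poch_succ, ← mul_assoc γ, ← tt_shift]; ring
    rw [e]
    exact h3

lemma tt_div_summable (γ b : ℝ) (hγ : γ < 1) : Summable (fun n : ℕ => tt γ n / (b + n)) := by
  obtain ⟨C, hC⟩ := tt_bound γ hγ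
  obtain ⟨N, hN⟩ := exists_nat_ge (2 * |b| + 1)
  have h := ((summable_succ_rpow (γ - 1 - 1) (by linarith)).mul_left (C * 4))
  refine Summable.of_norm_bounded_eventually_nat h ?_
  filter_upwards [Filter.eventually_ge_atTop N] with n hn
  have hn' : (N : ℝ) ≤ n := by exact_mod_cast hn
  have hb := neg_abs_le b
  have hb0 := abs_nonneg b
  have hp : (0 : ℝ) < (n : ℝ) + 1 := by positivity
  have hbn : ((n : ℝ) + 1) / 4 ≤ b + n := by linarith
  have hpos : 0 < b + n := by linarith
  rw [norm_div, Real.norm_eq_abs, Real.norm_eq_abs, abs_of_pos hpos, Real.rpow_sub_one hp.ne',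
    div_le_iff₀ hpos]
  have h0 := (abs_nonneg _).trans (hC n)
  calc |tt γ n| ≤ C * ((n : ℝ) + 1) ^ (γ - 1) := hC n
    _ = (C * ((n : ℝ) + 1) ^ (γ - 1)) * 4 / (n + 1) * ((n + 1) / 4) := by field_simp
    _ ≤ (C * ((n : ℝ) + 1) ^ (γ - 1)) * 4 / (n + 1) * (b + n) :=
        mul_le_mul_of_nonneg_left hbn (by positivity)
    _ = _ := by ring

lemma tt_hasSum_pow (γ x : ℝ) (hx0 : 0 < x) (hx1 : x < 1) :
    HasSum (fun n => tt γ n * x ^ n) ((1 - x) ^ (-γ)) := by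
  have h := (Real.one_div_one_sub_rpow_hasFPowerSeriesOnBall_zero γ).hasSum (y := x)
    (by simp [enorm_eq_nnnorm, ← NNReal.coe_lt_coe, abs_of_pos hx0, hx1])
  simp only [zero_add, one_div] at h
  rw [Real.rpow_neg (by linarith)]
  have e : ∀ n, tt γ n = Ring.multichoose γ n := by
    intro n
    have := Ring.factorial_nsmul_multichoose_eq_ascPochhammer γ n
    rw [Polynomial.ascPochhammer_smeval_eq_eval] at this
    have hf : (n.factorial : ℝ) ≠ 0 := by positivity
    rw [tt, poch, ← this, nsmul_eq_mul]; field_simp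
  have e2 : (fun n => tt γ n * x ^ n) = fun n : ℕ =>
      (FormalMultilinearSeries.ofScalars ℝ (fun n : ℕ => Ring.choose (γ + n - 1) n) n) fun _ => x := by
    ext n
    rw [FormalMultilinearSeries.ofScalars_apply_eq, e, Ring.multichoose_eq, smul_eq_mul]
  rw [e2]
  exact h

lemma beta_pos_case (γ b : ℝ) (hγ : γ < 1) (hb : 0 < b) :
    HasSum (fun n : ℕ => tt γ n / (b + n))
      (Real.Gamma b * Real.Gamma (1 - γ) / Real.Gamma (1 + b - γ)) := by
  have hint : ∀ n : ℕ, ∫ x in Set.Ioo (0:ℝ) 1, x ^ (b + n - 1) = 1 / (b + n) := by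
    intro n
    rw [← MeasureTheory.integral_Ioc_eq_integral_Ioo, ← intervalIntegral.integral_of_le zero_le_one,
      integral_rpow (Or.inl (by have : (0:ℝ) ≤ n := by positivity
                                linarith))]
    have : b + n ≠ 0 := by positivity
    simp [Real.zero_rpow this]
  have hintble : ∀ n : ℕ, MeasureTheory.IntegrableOn (fun x : ℝ => x ^ (b + n - 1)) (Set.Ioo (0:ℝ) 1) := by
    intro n
    have := intervalIntegral.intervalIntegrable_rpow' (a := 0) (b := 1) (r := b + n - 1)
      (by have : (0:ℝ) ≤ n := by positivity
          linarith)
    rw [intervalIntegrable_iff_integrableOn_Ioo_of_le zero_le_one] at this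
    exact this
  have H := MeasureTheory.hasSum_integral_of_summable_integral_norm
    (μ := MeasureTheory.volume.restrict (Set.Ioo (0:ℝ) 1))
    (F := fun (n : ℕ) (x : ℝ) => tt γ n * x ^ (b + n - 1))
    (fun n => (hintble n).const_mul _) (by
      have e : ∀ n : ℕ, ∫ x in Set.Ioo (0:ℝ) 1, ‖tt γ n * x ^ (b + n - 1)‖ = ‖tt γ n / (b + n)‖ := by
        intro n
        rw [norm_div, Real.norm_of_nonneg (r := b + n) (by positivity), div_eq_mul_one_div, ← hint n,
          ← MeasureTheory.integral_const_mul]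
        refine MeasureTheory.setIntegral_congr_fun measurableSet_Ioo fun x hx => ?_
        have : 0 ≤ x ^ (b + n - 1) := Real.rpow_nonneg hx.1.le _
        simp only [norm_mul, Real.norm_of_nonneg this]
      rw [funext e]
      exact (tt_div_summable γ b hγ).norm)
  have e1 : ∀ n : ℕ, ∫ x in Set.Ioo (0:ℝ) 1, tt γ n * x ^ (b + n - 1) = tt γ n / (b + n) := by
    intro n
    rw [MeasureTheory.integral_const_mul, hint]; ring
  have e2 : ∫ x in Set.Ioo (0:ℝ) 1, (∑' n : ℕ, tt γ n * x ^ (b + n - 1)) =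
      Real.Gamma b * Real.Gamma (1 - γ) / Real.Gamma (1 + b - γ) := by
    have e3 : ∫ x in Set.Ioo (0:ℝ) 1, (∑' n : ℕ, tt γ n * x ^ (b + n - 1)) =
        ∫ x in Set.Ioo (0:ℝ) 1, x ^ (b - 1) * (1 - x) ^ (1 - γ - 1) := by
      refine MeasureTheory.setIntegral_congr_fun measurableSet_Ioo fun x hx => ?_
      have := (tt_hasSum_pow γ x hx.1 hx.2).mul_left (x ^ (b - 1))
      rw [show 1 - γ - 1 = -γ by ring]
      rw [← this.tsum_eq]
      refine tsum_congr fun n => ?_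
      rw [show b + n - 1 = (b - 1) + n by ring, Real.rpow_add hx.1, Real.rpow_natCast]; ring
    rw [e3]
    have hB := ProbabilityTheory.beta_eq_betaIntegralReal b (1 - γ) hb (by linarith)
    rw [ProbabilityTheory.beta, show b + (1 - γ) = 1 + b - γ by ring] at hB
    rw [hB, Complex.betaIntegral, intervalIntegral.integral_of_le zero_le_one,
      MeasureTheory.integral_Ioc_eq_integral_Ioo, ← RCLike.ofReal_inj (K := ℂ)]
    have e4 : ∫ x in Set.Ioo (0:ℝ) 1, (x:ℂ) ^ ((b:ℂ) - 1) * (1 - (x:ℂ)) ^ (((1 - γ : ℝ):ℂ) - 1)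
        = ∫ x in Set.Ioo (0:ℝ) 1, ((x ^ (b - 1) * (1 - x) ^ (1 - γ - 1) : ℝ) : ℂ) := by
      refine MeasureTheory.setIntegral_congr_fun measurableSet_Ioo fun x hx => ?_
      have h1 : 0 ≤ 1 - x := by linarith [hx.2]
      rw [Complex.ofReal_mul, Complex.ofReal_cpow hx.1.le, Complex.ofReal_cpow h1]
      push_cast
      rfl
    rw [e4, integral_complex_ofReal]
    simp
  rw [e2, funext e1] at H
  exact H

lemma beta_rec (γ b : ℝ) (hγ : γ < 1) (hb : ∀ k : ℕ, b ≠ -(k : ℝ)) (S : ℝ)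
    (h : HasSum (fun n : ℕ => tt γ n / (b + 1 + n)) S) :
    HasSum (fun n : ℕ => tt γ n / (b + n)) ((1 + b - γ) / b * S) := by
  have hb0 : b ≠ 0 := by simpa using hb 0
  have hbk : ∀ k : ℕ, b + k ≠ 0 := fun k h' => hb k (by linarith)
  have hs := (tt_div_summable γ b hγ)
  set T := ∑' n : ℕ, tt γ n / (b + n) with hT
  have hT' : HasSum (fun n : ℕ => tt γ n / (b + n)) T := hs.hasSum
  have hd := (h.mul_left (1 + b - γ)).sub (hT'.mul_left b)
  have hp : ∀ n : ℕ, ∑ k ∈ range n, ((1 + b - γ) * (tt γ k / (b + 1 + k)) - b * (tt γ k / (b + k)))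
      = - (n * tt γ n / (b + n)) := by
    intro n
    induction n with
    | zero => simp
    | succ n ih =>
      rw [sum_range_succ, ih]
      have h1 := hbk n
      have h2 := hbk (n + 1)
      have h3 := tt_succ γ n
      push_cast at h2 ⊢
      have h2' : b + 1 + n ≠ 0 := by rwa [add_right_comm, add_assoc]
      rw [mul_comm ((n : ℝ) + 1), h3, show b + (n + 1 : ℝ) = b + 1 + n by ring]
      field_simp
      ring
  have hlim : Filter.Tendsto (fun n : ℕ => - (n * tt γ n / (b + n))) Filter.atTop (nhds 0) := by
    have h1 : Filter.Tendsto (fun n : ℕ => -(tt γ n - b * (tt γ n / (b + n)))) Filter.atTop (nhds 0) := by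
      simpa using ((tt_tendsto γ hγ).sub (hs.tendsto_atTop_zero.const_mul b)).neg
    refine h1.congr fun n => ?_
    have := hbk n
    field_simp
    ring
  have hz : (1 + b - γ) * S - b * T = 0 := by
    refine tendsto_nhds_unique hd.tendsto_sum_nat ?_
    rw [funext hp]; exact hlim
  have : (1 + b - γ) / b * S = T := by
    field_simp; linarith
  rw [this]; exact hT'

lemma beta_gen (γ : ℝ) (hγ : γ < 1) (N : ℕ) : ∀ b : ℝ, -(N : ℝ) < b → (∀ k : ℕ, b ≠ -(k : ℝ)) →
    (∀ k : ℕ, 1 + b - γ ≠ -(k : ℝ)) →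
    HasSum (fun n : ℕ => tt γ n / (b + n))
      (Real.Gamma b * Real.Gamma (1 - γ) / Real.Gamma (1 + b - γ)) := by
  induction N with
  | zero => intro b hb _ _; exact beta_pos_case γ b hγ (by simpa using hb)
  | succ N ih =>
    intro b hb h1 h2
    push_cast at hb
    have h := ih (b + 1) (by linarith)
      (fun k hk => h1 (k + 1) (by push_cast; linarith))
      (fun k hk => h2 (k + 1) (by push_cast; linarith))
    have h' := beta_rec γ b hγ h1 _ h
    have hb0 : b ≠ 0 := by simpa using h1 0
    have hc0 : 1 + b - γ ≠ 0 := by simpa using h2 0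
    convert h' using 1
    have hg : Real.Gamma (1 + b - γ) ≠ 0 := Real.Gamma_ne_zero h2
    rw [Real.Gamma_add_one hb0, show 1 + (b + 1) - γ = (1 + b - γ) + 1 by ring,
      Real.Gamma_add_one hc0]
    field_simp

lemma lemP (l : ℕ) (b : ℝ) (h1 : ∀ k : ℕ, b ≠ -(k : ℝ)) : ∀ (γ α : ℝ), γ < 1 - (l : ℝ) →
    (∀ k : ℕ, 1 + b - γ ≠ -(k : ℝ)) →
    HasSum (fun n : ℕ => tt γ n * poch (α + n) l / (b + n))
      (poch (α - b) l * (Real.Gamma b * Real.Gamma (1 - γ) / Real.Gamma (1 + b - γ))) := by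
  induction l with
  | zero =>
    intro γ α hγ h2
    obtain ⟨N, hN⟩ := exists_nat_gt (-b)
    simpa [poch_zero] using beta_gen γ (by simpa using hγ) N b (by linarith) h1 h2
  | succ l ih =>
    intro γ α hγ h2
    push_cast at hγ
    have a1 := (ih γ α (by linarith) h2).mul_left (α + l - b)
    have a2 := (lemQ l γ α (by linarith)).add a1
    convert a2 using 1
    · ext n
      have : b + n ≠ 0 := fun h' => h1 n (by linarith)
      rw [poch_succ]
      field_simp
      ring
    · rw [poch_succ]; ring

lemma partial_fractions (r : ℕ) : ∀ x : ℝ, (∀ k : ℕ, x ≠ -(k : ℝ)) →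
    ∑ k ∈ range (r + 1), (-1 : ℝ) ^ k * (r.choose k) / (x + k) = r.factorial / poch x (r + 1) := by
  induction r with
  | zero => intro x hx; simp [poch_succ, poch_zero]
  | succ r ih =>
    intro x hx
    have hx1 : ∀ k : ℕ, x + 1 ≠ -(k : ℝ) := fun k hk => hx (k + 1) (by push_cast; linarith)
    have i1 := ih x hx
    have i2 := ih (x + 1) hx1
    have e : ∑ k ∈ range (r + 1 + 1), (-1 : ℝ) ^ k * ((r + 1).choose k) / (x + k) =
        ∑ k ∈ range (r + 1), (-1 : ℝ) ^ k * (r.choose k) / (x + k) -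
        ∑ k ∈ range (r + 1), (-1 : ℝ) ^ k * (r.choose k) / (x + 1 + k) := by
      have e0 : ∑ k ∈ range (r + 1), (-1 : ℝ) ^ k * (r.choose k) / (x + k) =
          ∑ k ∈ range (r + 1 + 1), (-1 : ℝ) ^ k * (r.choose k) / (x + k) := by
        rw [sum_range_succ _ (r + 1)]; simp
      rw [e0, sum_range_succ' _ (r + 1), sum_range_succ' _ (r + 1), add_sub_right_comm,
        ← sum_sub_distrib]
      congr 1
      · refine sum_congr rfl fun k _ => ?_
        rw [Nat.choose_succ_succ]; push_cast
        rw [show x + (k + 1 : ℝ) = x + 1 + k by ring]; ring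
      · simp
    rw [e, i1, i2]
    have hp := poch_ne_zero (x + 1) hx1 (r + 1)
    have hx0 : x ≠ 0 := by simpa using hx 0
    have hp0 := poch_ne_zero x hx (r + 1)
    have q1 := poch_succ_left x (r + 1)
    have q2 := poch_succ x (r + 1)
    have hr : x + (r + 1 : ℝ) ≠ 0 := fun h' => hx (r + 1) (by push_cast; linarith)
    push_cast at q2
    have q3 : poch (x + 1) (r + 1) = poch x (r + 1) * (x + (r + 1)) / x := by
      field_simp; linarith
    rw [q3, q2, Nat.factorial_succ]
    push_cast
    field_simp
    ring

lemma poch_neg (r : ℕ) (k : ℕ) (hk : k ≤ r) :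
    poch (-(r : ℝ)) k / k.factorial = (-1 : ℝ) ^ k * r.choose k := by
  induction k with
  | zero => simp [poch_zero]
  | succ k ih =>
    have h := ih (by omega)
    have hf : (k.factorial : ℝ) ≠ 0 := by positivity
    rw [div_eq_iff hf] at h
    rw [poch_succ, h, Nat.factorial_succ]
    have hc : ((r.choose (k + 1) : ℕ) : ℝ) * (k + 1) = r.choose k * (r - k) := by
      have := Nat.choose_succ_right_eq r k
      have h2 := congrArg (Nat.cast : ℕ → ℝ) this
      push_cast [Nat.cast_sub (show k ≤ r by omega)] at h2
      exact h2
    push_cast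
    field_simp
    rw [pow_succ]
    linear_combination (-1 : ℝ) ^ k * hc

lemma poch_shift (a : ℝ) (l k : ℕ) :
    poch (a - k) l * poch (1 - a - l) k = poch a l * poch (1 - a) k := by
  induction k with
  | zero => simp [poch_zero]
  | succ k ih =>
    have q1 := poch_succ_left (a - (k + 1)) l
    have q2 := poch_succ (a - (k + 1)) l
    rw [q1, show a - (k + 1) + 1 = a - k by ring] at q2
    rw [poch_succ, poch_succ]
    push_cast
    linear_combination (1 - a + k) * ih + poch (1 - a - l) k * q2

lemma gamma_shift (b : ℝ) (hb : ∀ k : ℕ, b ≠ -(k : ℝ)) (k : ℕ) :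
    Real.Gamma (b + k) = Real.Gamma b * poch b k := by
  induction k with
  | zero => simp [poch_zero]
  | succ k ih =>
    have : b + k ≠ 0 := fun h' => hb k (by linarith)
    push_cast
    rw [← add_assoc, Real.Gamma_add_one this, ih, poch_succ]; ring

theorem F32_KarlssonMinton_extension (l r : ℕ) (α β γ : ℝ)
    (hγ : γ < 1 - (l : ℝ))
    (hβr1 : ∀ k : ℕ, β + r + 1 ≠ -(k : ℝ))
    (hα : ∀ k : ℕ, α ≠ -(k : ℝ))
    (hβ : ∀ k : ℕ, β ≠ -(k : ℝ))
    (hβγ : ∀ k : ℕ, 1 + β - γ ≠ -(k : ℝ))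
    (hαl : poch α l ≠ 0)
    (h1 : ∀ k : ℕ, k ≤ r → poch (1 + β - γ) k ≠ 0)
    (h2 : ∀ k : ℕ, k ≤ r → poch (1 + β - α - l) k ≠ 0) :
    F32 β (α + l) γ (β + r + 1) α =
      poch β (r + 1) * poch (α - β) l * Real.Gamma (1 - γ) * Real.Gamma β /
        (poch α l * Real.Gamma (1 + β - γ) * r.factorial) *
        F32sum r (-(r : ℝ)) β (1 + β - α) (1 + β - γ) (1 + β - α - l) := by
  have hsum : ∀ k ∈ range (r + 1), HasSum
      (fun n : ℕ => (-1 : ℝ) ^ k * (r.choose k) * (tt γ n * poch (α + n) l / (β + k + n)))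
      ((-1 : ℝ) ^ k * (r.choose k) * (poch (α - (β + k)) l * (Real.Gamma (β + k) *
        Real.Gamma (1 - γ) / Real.Gamma (1 + (β + k) - γ)))) := by
    intro k _
    refine (lemP l (β + k) (fun j hj => hβ (k + j) (by push_cast; linarith)) γ α hγ
      (fun j hj => hβγ (k + j) (by push_cast; linarith))).mul_left _
  have H := (hasSum_sum hsum).mul_left (poch β (r + 1) / (poch α l * r.factorial))
  have hG : Real.Gamma (1 + β - γ) ≠ 0 := Real.Gamma_ne_zero hβγ
  have hf : (r.factorial : ℝ) ≠ 0 := by positivity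
  have hterm : ∀ n : ℕ, poch β (r + 1) / (poch α l * r.factorial) *
      ∑ k ∈ range (r + 1), (-1 : ℝ) ^ k * (r.choose k) * (tt γ n * poch (α + n) l / (β + k + n)) =
      poch β n * poch (α + l) n * poch γ n /
        (poch (β + r + 1) n * poch α n * n.factorial) := by
    intro n
    have hβn : ∀ k : ℕ, β + n ≠ -(k : ℝ) := fun k hk => hβ (n + k) (by push_cast; linarith)
    have pf := partial_fractions r (β + n) hβn
    have e : ∑ k ∈ range (r + 1), (-1 : ℝ) ^ k * (r.choose k) * (tt γ n * poch (α + n) l / (β + k + n))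
        = tt γ n * poch (α + n) l * (r.factorial / poch (β + n) (r + 1)) := by
      rw [← pf, mul_sum]
      refine sum_congr rfl fun k _ => ?_
      rw [show β + k + n = β + n + k by ring]; ring
    rw [e, tt]
    have a1 := poch_add β n (r + 1)
    have a2 := poch_add β (r + 1) n
    have a3 := poch_add α n l
    have a4 := poch_add α l n
    rw [add_comm n (r + 1), a2] at a1
    rw [add_comm n l, a4] at a3
    push_cast at a1
    rw [← add_assoc] at a1
    have n1 := poch_ne_zero (β + n) hβn (r + 1)
    have n2 := poch_ne_zero (β + r + 1) hβr1 n
    have n3 := poch_ne_zero α hα n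
    have hfn : (n.factorial : ℝ) ≠ 0 := by positivity
    field_simp
    linear_combination (poch γ n) * (poch (α + n) l * poch α n) * a1
      - (poch γ n) * (poch β n * poch (β + n) (r + 1)) * a3
  rw [funext hterm] at H
  rw [F32, H.tsum_eq, F32sum, mul_sum, mul_sum]
  refine sum_congr rfl fun k hk => ?_
  have hk' : k ≤ r := by have := mem_range.1 hk; omega
  have g1 := gamma_shift β hβ k
  have g2 := gamma_shift (1 + β - γ) hβγ k
  have n1 := h1 k hk'
  have n2 := h2 k hk'
  have sh := poch_shift (α - β) l k
  rw [show 1 - (α - β) - l = 1 + β - α - l by ring, show 1 - (α - β) = 1 + β - α by ring] at sh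
  rw [← poch_neg r k hk', g1, show 1 + (β + k) - γ = 1 + β - γ + k by ring, g2,
    show α - (β + k) = α - β - k by ring]
  have hfk : (k.factorial : ℝ) ≠ 0 := by positivity
  have sh' : poch (α - β - k) l = poch (α - β) l * poch (1 + β - α) k / poch (1 + β - α - l) k := by
    rw [eq_div_iff n2]; exact sh
  rw [sh']
  field_simp
end

section
/- Let m₁, m₂ be integers with m₁² + m₂² > 0, and let α, γ be real numbers such that α, γ, and γ − α are not integers. Write (x)₊ = max(0, x). For every integer n ≥ max(|m₁|, |m₂ − m₁|), the coefficient L(n) := ( (1−α)_{m₁} / (2−γ)_{m₂} ) · Σ_{k=0}^{n−(m₂)₊} (α)_k (1−α+m₁)_{n−(m₂)₊−k} (−1)^{n−(m₂)₊−k} / ( (γ)_k (2−γ+m₂)_{n−(m₂)₊−k} · k! · (n−(m₂)₊−k)! ) equals the coefficient R(n) := (1−γ)_{m₂} (γ−α)_{m₁−m₂} · Σ_{k=0}^{n−(−m₂)₊} (1−α)_k (α−m₁)_{n−(−m₂)₊−k} (−1)^k / ( (2−γ)_k (γ−m₂)_{n−(−m₂)₊−k} · k! · (n−(−m₂)₊−k)!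 ), where a sum with negative upper limit is interpreted as 0. -/
open Finset

/-- A real number is not an integer. -/
def NonInt (a : ℝ) : Prop := ∀ k : ℤ, a ≠ (k : ℝ)

lemma NonInt.add_int {a : ℝ} (h : NonInt a) (b : ℝ) (k : ℤ) (hb : b = a + k) : NonInt b := by
  intro j hj
  apply h (j - k)
  push_cast
  linarith

lemma NonInt.neg_add_int {a : ℝ} (h : NonInt a) (b : ℝ) (k : ℤ) (hb : b = -a + k) : NonInt b := by
  intro j hj
  apply h (k - j)
  push_cast
  linarith

lemma NonInt.gamma_ne {a : ℝ} (h : NonInt a) : Real.Gamma a ≠ 0 := by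
  apply Real.Gamma_ne_zero
  intro m hm
  apply h (-(m : ℤ))
  push_cast
  exact hm

lemma NonInt.ne_zero {a : ℝ} (h : NonInt a) : a ≠ 0 := by
  have := h 0
  simpa using this

lemma poch_gamma {a : ℝ} (h : NonInt a) (n : ℕ) :
    poch a n = Real.Gamma (a + n) / Real.Gamma a := by
  induction n with
  | zero => simp [poch_zero, h.gamma_ne]
  | succ n ih =>
    have h1 : NonInt (a + n) := h.add_int _ n (by push_cast; ring)
    rw [poch_succ, ih]
    push_cast
    rw [← add_assoc, Real.Gamma_add_one h1.ne_zero]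
    ring

lemma NonInt.poch_ne {a : ℝ} (h : NonInt a) (n : ℕ) : poch a n ≠ 0 := by
  rw [poch_gamma h]
  exact div_ne_zero (h.add_int _ n (by push_cast; ring)).gamma_ne h.gamma_ne

lemma poch_refl {a : ℝ} (h : NonInt a) (n : ℕ) :
    poch (1 - a) n = (-1) ^ n * (Real.Gamma a / Real.Gamma (a - n)) := by
  induction n with
  | zero => simp [poch_zero, h.gamma_ne]
  | succ n ih =>
    have h1 : NonInt (a - (n + 1)) := h.add_int _ (-(n + 1)) (by push_cast; ring)
    have h2 := h1.gamma_ne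
    have h3 := h1.ne_zero
    have h4 : Real.Gamma (a - n) = (a - (n + 1)) * Real.Gamma (a - (n + 1)) := by
      rw [← Real.Gamma_add_one h3]
      congr 1
      ring
    rw [poch_succ, ih, h4]
    push_cast
    field_simp
    ring

lemma neg_one_pow_sq (n : ℕ) : ((-1 : ℝ) ^ n) * (-1) ^ n = 1 := by
  rw [← mul_pow]; simp

lemma pochZ_gamma {a : ℝ} (h : NonInt a) (k : ℤ) :
    pochZ a k = Real.Gamma (a + k) / Real.Gamma a := by
  unfold pochZ
  split_ifs with hk
  · obtain ⟨n, rfl⟩ := Int.eq_ofNat_of_zero_le hk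
    simpa using poch_gamma h n
  · obtain ⟨n, hn⟩ := Int.eq_ofNat_of_zero_le (show 0 ≤ -k by omega)
    obtain rfl : k = -(n : ℤ) := by omega
    have h1 : NonInt (a - n) := h.add_int _ (-n) (by push_cast; ring)
    simp only [neg_neg, Int.toNat_natCast]
    rw [poch_refl h]
    push_cast
    rw [← sub_eq_add_neg]
    have := h.gamma_ne
    have := h1.gamma_ne
    have := neg_one_pow_sq n
    field_simp

lemma pochZ_refl {a : ℝ} (h : NonInt a) (k : ℤ) :
    pochZ (1 - a) k = (-1) ^ k * (Real.Gamma a / Real.Gamma (a - k)) := by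
  unfold pochZ
  split_ifs with hk
  · obtain ⟨n, rfl⟩ := Int.eq_ofNat_of_zero_le hk
    simpa using poch_refl h n
  · obtain ⟨n, hn⟩ := Int.eq_ofNat_of_zero_le (show 0 ≤ -k by omega)
    obtain rfl : k = -(n : ℤ) := by omega
    have h1 : NonInt (a + n) := h.add_int _ (n) (by push_cast; ring)
    simp only [neg_neg, Int.toNat_natCast, sub_sub_cancel]
    rw [poch_gamma h]
    push_cast
    rw [sub_neg_eq_add, zpow_neg, zpow_natCast]
    have := h.gamma_ne
    have := h1.gamma_ne
    have := neg_one_pow_sq n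
    field_simp
    linear_combination this

lemma prod_gamma {s : ℝ} (h : NonInt s) (n : ℕ) :
    ∏ j ∈ Finset.range n, (s - j) = Real.Gamma (s + 1) / Real.Gamma (s + 1 - n) := by
  have h0 : NonInt (s + 1) := h.add_int _ 1 (by push_cast; ring)
  induction n with
  | zero => simp [h0.gamma_ne]
  | succ n ih =>
    have h1 : NonInt (s - n) := h.add_int _ (-n) (by push_cast; ring)
    have h4 : Real.Gamma (s + 1 - n) = (s - n) * Real.Gamma (s - n) := by
      rw [← Real.Gamma_add_one h1.ne_zero]
      congr 1
      ring
    rw [Finset.prod_range_succ, ih, h4]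
    push_cast
    rw [show s + 1 - (n + 1 : ℝ) = s - n by ring]
    have := h1.gamma_ne
    have := h1.ne_zero
    field_simp

/-- The mixed quotient `Γ(s-N)/Γ(s+1)` for an integer `N` of either sign. -/
lemma mixed_gamma {s : ℝ} (h : NonInt s) (N : ℤ) :
    poch (s + 1) (-N - 1).toNat / ∏ j ∈ Finset.range (N + 1).toNat, (s - j)
      = Real.Gamma (s - N) / Real.Gamma (s + 1) := by
  have h0 : NonInt (s + 1) := h.add_int _ 1 (by push_cast; ring)
  by_cases hN : 0 ≤ N
  · obtain ⟨n, rfl⟩ := Int.eq_ofNat_of_zero_le hN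
    rw [prod_gamma h, show (-(n : ℤ) - 1).toNat = 0 by omega,
      show ((n : ℤ) + 1).toNat = n + 1 by omega, poch_zero, one_div, inv_div]
    push_cast
    congr 2
    ring
  · obtain ⟨n, hn⟩ := Int.eq_ofNat_of_zero_le (show 0 ≤ -N - 1 by omega)
    obtain rfl : N = -(n : ℤ) - 1 := by omega
    rw [show (-(-(n : ℤ) - 1) - 1).toNat = n by omega,
      show (-(n : ℤ) - 1 + 1).toNat = 0 by omega, poch_gamma h0]
    push_cast
    simp only [Finset.range_zero, Finset.prod_empty, div_one]
    congr 2
    ring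

lemma prod_erase_range (N k : ℕ) (hk : k ≤ N) :
    ∏ j ∈ (Finset.range (N + 1)).erase k, ((k : ℝ) - j)
      = k.factorial * ((-1) ^ (N - k) * (N - k).factorial) := by
  obtain ⟨d, rfl⟩ := Nat.exists_eq_add_of_le hk
  rw [Nat.add_sub_cancel_left]
  induction d with
  | zero =>
    rw [Nat.add_zero, Finset.range_add_one, Finset.erase_insert (by simp)]
    simp only [pow_zero, Nat.factorial_zero, Nat.cast_one, mul_one]
    clear hk
    rw [← Finset.prod_range_reflect, ← Finset.prod_range_add_one_eq_factorial]
    push_cast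
    apply Finset.prod_congr rfl
    intro j hj
    have : j < k := by simpa using hj
    rw [Nat.cast_sub (by omega), Nat.cast_sub (by omega)]
    push_cast
    ring
  | succ d ih =>
    rw [show k + (d + 1) + 1 = (k + d + 1) + 1 by ring, Finset.range_add_one,
      Finset.erase_insert_of_ne (by omega), Finset.prod_insert (by simp), ih (by omega),
      Nat.factorial_succ]
    push_cast
    ring

lemma choose_poch (r : ℝ) (n : ℕ) : Ring.choose r n = poch (r - n + 1) n / n.factorial := by
  rw [Ring.choose_eq_smul, Polynomial.descPochhammer_smeval_eq_ascPochhammer,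
    Polynomial.ascPochhammer_smeval_eq_eval, poch, smul_eq_mul]
  field_simp

lemma poch_neg_s5 (a : ℝ) (n : ℕ) : poch (-a - n + 1) n = (-1) ^ n * poch a n := by
  have h := ascPochhammer_eval_neg_eq_descPochhammer ℝ (-a) n
  rw [neg_neg, descPochhammer_eval_eq_ascPochhammer] at h
  unfold poch
  rw [h, ← mul_assoc, neg_one_pow_sq, one_mul]

open PowerSeries in
/-- Kummer series as a formal power series. -/
noncomputable def KS (a c : ℝ) : PowerSeries ℝ :=
  PowerSeries.mk fun n => poch a n / (poch c n * n.factorial)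

lemma coeff_evalNeg (f : PowerSeries ℝ) (n : ℕ) :
    PowerSeries.coeff n (PowerSeries.evalNegHom f) = (-1) ^ n * PowerSeries.coeff n f := by
  simp [PowerSeries.evalNegHom, PowerSeries.coeff_rescale]

lemma kummer (a : ℝ) {c : ℝ} (hc : NonInt c) :
    PowerSeries.evalNegHom (KS a c) * PowerSeries.exp ℝ = KS (c - a) c := by
  ext n
  have h := Ring.add_choose_eq (r := -a) (s := c + n - 1) n (Commute.all _ _)
  rw [choose_poch, show -a + (c + n - 1) - n + 1 = c - a by ring] at h
  rw [PowerSeries.coeff_mul]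
  have hcn := hc.poch_ne n
  have : PowerSeries.coeff n (KS (c - a) c) = (poch (c - a) n / n.factorial) / poch c n := by
    simp only [KS, PowerSeries.coeff_mk]
    field_simp
  rw [this, h, Finset.sum_div]
  apply Finset.sum_congr rfl
  rintro ⟨i, j⟩ hij
  obtain rfl : i + j = n := by simpa using hij
  rw [choose_poch, choose_poch, poch_neg_s5, coeff_evalNeg, PowerSeries.coeff_exp]
  simp only [KS, PowerSeries.coeff_mk]
  have h1 : c + ((i + j : ℕ) : ℝ) - 1 - j + 1 = c + i := by push_cast; ring
  rw [h1, poch_add]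
  have h2 := hc.poch_ne i
  have h3 : poch (c + i) j ≠ 0 :=
    (hc.add_int (c + i) i (by push_cast; ring)).poch_ne j
  simp only [one_div, map_inv₀, map_natCast]
  field_simp

lemma evalNeg_evalNeg (f : PowerSeries ℝ) :
    PowerSeries.evalNegHom (PowerSeries.evalNegHom f) = f := by
  ext n
  rw [coeff_evalNeg, coeff_evalNeg, ← mul_assoc, neg_one_pow_sq, one_mul]

lemma kummer_prod (a a' : ℝ) {c c' : ℝ} (hc : NonInt c) (hc' : NonInt c') :
    PowerSeries.evalNegHom (KS a c) * KS a' c'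
      = KS (c - a) c * PowerSeries.evalNegHom (KS (c' - a') c') := by
  rw [← kummer a hc, ← kummer a' hc', map_mul, evalNeg_evalNeg]
  linear_combination (-PowerSeries.evalNegHom (KS a c) * KS a' c')
    * (PowerSeries.exp_mul_exp_neg_eq_one (A := ℝ))

lemma kummer_sum (a a' : ℝ) {c c' : ℝ} (hc : NonInt c) (hc' : NonInt c') (M : ℕ) :
    ∑ k ∈ Finset.range (M + 1), poch a k * poch a' (M - k) * (-1 : ℝ) ^ k /
          (poch c k * poch c' (M - k) * k.factorial * (M - k).factorial)
    = ∑ k ∈ Finset.range (M + 1), poch (c - a) k * poch (c' - a') (M - k) * (-1 : ℝ) ^ (M - k) /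
          (poch c k * poch c' (M - k) * k.factorial * (M - k).factorial) := by
  have h := congrArg (PowerSeries.coeff M) (kummer_prod a a' hc hc')
  rw [PowerSeries.coeff_mul, PowerSeries.coeff_mul,
    Finset.Nat.sum_antidiagonal_eq_sum_range_succ_mk,
    Finset.Nat.sum_antidiagonal_eq_sum_range_succ_mk] at h
  simp only [coeff_evalNeg, KS, PowerSeries.coeff_mk] at h
  convert h using 2 with k _ k _
  · ring
  · ring

lemma residue_sum (P : Polynomial ℝ) {γ : ℝ} (hγ : NonInt γ) (N M : ℕ)
    (hP : P.natDegree + 2 ≤ N + M) :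
    ∑ k ∈ Finset.range N, P.eval (k : ℝ) /
        ((∏ j ∈ (Finset.range N).erase k, ((k : ℝ) - j)) *
          ∏ l ∈ Finset.range M, ((k - 1 + γ : ℝ) - l)) +
      ∑ l ∈ Finset.range M, P.eval (1 - γ + l : ℝ) /
        ((∏ j ∈ Finset.range N, ((1 - γ + l : ℝ) - j)) *
          ∏ j ∈ (Finset.range M).erase l, ((l : ℝ) - j)) = 0 := by
  classical
  set s : Finset (ℕ ⊕ ℕ) := (Finset.range N).disjSum (Finset.range M) with hs
  set v : ℕ ⊕ ℕ → ℝ := Sum.elim (fun k => (k : ℝ)) (fun l => 1 - γ + l) with hv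
  have hcard : s.card = N + M := by simp [hs]
  have hinj : Set.InjOn v s := by
    apply Function.Injective.injOn
    rintro (i | i) (j | j) hij
    · simpa [hv] using hij
    · exfalso
      simp only [hv, Sum.elim_inl, Sum.elim_inr] at hij
      apply hγ (1 + j - i)
      push_cast
      linarith
    · exfalso
      simp only [hv, Sum.elim_inl, Sum.elim_inr] at hij
      apply hγ (1 + i - j)
      push_cast
      linarith
    · simpa [hv] using hij
  have key := Lagrange.coeff_eq_sum hinj (P := P) (by
    rw [hcard]
    refine lt_of_le_of_lt Polynomial.degree_le_natDegree ?_
    exact_mod_cast (by omega : P.natDegree < N + M))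
  rw [Polynomial.coeff_eq_zero_of_natDegree_lt (by omega)] at key
  rw [key, hs, Finset.sum_disjSum]
  congr 1
  · apply Finset.sum_congr rfl
    intro k hk
    have : ((Finset.range N).disjSum (Finset.range M)).erase (Sum.inl k)
        = ((Finset.range N).erase k).disjSum (Finset.range M) := by
      ext (x | x) <;> simp
    rw [this, Finset.prod_disjSum]
    simp only [hv, Sum.elim_inl, Sum.elim_inr]
    congr 2
    apply Finset.prod_congr rfl
    intros
    ring
  · apply Finset.sum_congr rfl
    intro k hk
    have : ((Finset.range N).disjSum (Finset.range M)).erase (Sum.inr k)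
        = ((Finset.range N)).disjSum ((Finset.range M).erase k) := by
      ext (x | x) <;> simp
    rw [this, Finset.prod_disjSum]
    simp only [hv, Sum.elim_inl, Sum.elim_inr]
    congr 2
    apply Finset.prod_congr rfl
    intros
    ring

lemma residue_gamma {β γ : ℝ} (hβ : NonInt β) (hγ : NonInt γ) (hγβ : NonInt (γ - β))
    (N M : ℤ) (A : ℕ)
    (hA : A + (-N - 1).toNat + (-M - 1).toNat + 2 ≤ (N + 1).toNat + (M + 1).toNat) :
    ∑ k ∈ Finset.range (N + 1).toNat,
        Real.Gamma (k + β + A) / Real.Gamma (k + β) *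
          (Real.Gamma (k - 1 + γ - M) / Real.Gamma (k + γ)) *
          ((-1) ^ (N.toNat - k) / (k.factorial * (N.toNat - k).factorial)) +
      ∑ l ∈ Finset.range (M + 1).toNat,
        Real.Gamma (1 - γ + l + β + A) / Real.Gamma (1 - γ + l + β) *
          (Real.Gamma (1 - γ + l - N) / Real.Gamma (2 - γ + l)) *
          ((-1) ^ (M.toNat - l) / (l.factorial * (M.toNat - l).factorial)) = 0 := by
  set P : Polynomial ℝ := (ascPochhammer ℝ A).comp (Polynomial.X + Polynomial.C β) *
    (ascPochhammer ℝ (-N - 1).toNat).comp (Polynomial.X + Polynomial.C 1) *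
    (ascPochhammer ℝ (-M - 1).toNat).comp (Polynomial.X + Polynomial.C γ) with hPdef
  have hdeg : P.natDegree ≤ A + (-N - 1).toNat + (-M - 1).toNat := by
    rw [hPdef]
    refine (Polynomial.natDegree_mul_le).trans (add_le_add
      ((Polynomial.natDegree_mul_le).trans (add_le_add ?_ ?_)) ?_) <;>
    · rw [Polynomial.natDegree_comp, ascPochhammer_natDegree, Polynomial.natDegree_X_add_C, mul_one]
  have heval : ∀ x : ℝ, P.eval x = poch (x + β) A * poch (x + 1) (-N - 1).toNat *
      poch (x + γ) (-M - 1).toNat := by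
    intro x
    simp [hPdef, poch, Polynomial.eval_comp]
  have key := residue_sum P hγ (N + 1).toNat (M + 1).toNat (by omega)
  rw [← key]
  have aux : ∀ (K : ℤ) (k : ℕ), k ∈ Finset.range (K + 1).toNat → 0 ≤ K ∧ k ≤ K.toNat ∧
      (∏ j ∈ (Finset.range (K + 1).toNat).erase k, ((k : ℝ) - j))⁻¹
      = (-1) ^ (K.toNat - k) / (k.factorial * (K.toNat - k).factorial) := by
    intro K k hk
    have hk' := Finset.mem_range.mp hk
    refine ⟨by omega, by omega, ?_⟩
    rw [show (K + 1).toNat = K.toNat + 1 by omega, prod_erase_range _ _ (by omega)]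
    have h1 := neg_one_pow_sq (K.toNat - k)
    field_simp
    linear_combination -h1
  congr 1
  · apply Finset.sum_congr rfl
    intro k hk
    obtain ⟨h0, hk2, hk3⟩ := aux N k hk
    have hn1 : NonInt (k + β) := hβ.add_int _ k (by push_cast; ring)
    have hn2 : NonInt (k - 1 + γ) := hγ.add_int _ (k - 1) (by push_cast; ring)
    have hm := mixed_gamma hn2 M
    rw [show (k : ℝ) - 1 + γ + 1 = k + γ by ring] at hm
    rw [← hm, ← hk3, heval, poch_gamma hn1, show (-N - 1).toNat = 0 by omega, poch_zero]
    ring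
  · apply Finset.sum_congr rfl
    intro l hl
    obtain ⟨h0, hk2, hk3⟩ := aux M l hl
    have hn1 : NonInt (1 - γ + l + β) := hγβ.neg_add_int _ (l + 1) (by push_cast; ring)
    have hn2 : NonInt (1 - γ + l) := hγ.neg_add_int _ (l + 1) (by push_cast; ring)
    have hm := mixed_gamma hn2 N
    rw [show 1 - γ + (l : ℝ) + 1 = 2 - γ + l by ring] at hm
    rw [← hm, ← hk3, heval, poch_gamma hn1, show (-M - 1).toNat = 0 by omega, poch_zero,
      show 1 - γ + (l : ℝ) + 1 = 2 - γ + l by ring]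
    ring

theorem Kummer_coefficients_equal (m₁ m₂ : ℤ) (hm : 0 < m₁ ^ 2 + m₂ ^ 2)
    (α γ : ℝ) (hα : ∀ k : ℤ, α ≠ (k : ℝ)) (hγ : ∀ k : ℤ, γ ≠ (k : ℝ))
    (hγα : ∀ k : ℤ, γ - α ≠ (k : ℝ))
    (n : ℕ) (hn : max |m₁| |m₂ - m₁| ≤ (n : ℤ)) :
    pochZ (1 - α) m₁ / pochZ (2 - γ) m₂ *
      ∑ k ∈ Finset.range (((n : ℤ) - max 0 m₂ + 1).toNat),
        poch α k * poch (1 - α + (m₁ : ℝ)) (((n : ℤ) - max 0 m₂).toNat - k) *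
            (-1 : ℝ) ^ (((n : ℤ) - max 0 m₂).toNat - k) /
          (poch γ k * poch (2 - γ + (m₂ : ℝ)) (((n : ℤ) - max 0 m₂).toNat - k) *
            k.factorial * (((n : ℤ) - max 0 m₂).toNat - k).factorial) =
    pochZ (1 - γ) m₂ * pochZ (γ - α) (m₁ - m₂) *
      ∑ k ∈ Finset.range (((n : ℤ) - max 0 (-m₂) + 1).toNat),
        poch (1 - α) k * poch (α - (m₁ : ℝ)) (((n : ℤ) - max 0 (-m₂)).toNat - k) *
            (-1 : ℝ) ^ k /
          (poch (2 - γ) k * poch (γ - (m₂ : ℝ)) (((n : ℤ) - max 0 (-m₂)).toNat - k) *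
            k.factorial * (((n : ℤ) - max 0 (-m₂)).toNat - k).factorial) := by
  have hα' : NonInt α := hα
  have hγ' : NonInt γ := hγ
  have hγα' : NonInt (γ - α) := hγα
  have hn1 := (abs_le.mp ((le_max_left _ _).trans hn))
  have hn2 := (abs_le.mp ((le_max_right _ _).trans hn))
  obtain ⟨N, hN⟩ : ∃ N : ℤ, N = n - max 0 m₂ := ⟨_, rfl⟩
  obtain ⟨M, hM⟩ : ∃ M : ℤ, M = n - max 0 (-m₂) := ⟨_, rfl⟩
  rw [← hN, ← hM]
  have hNM : M = N + m₂ := by omega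
  obtain ⟨A, hA⟩ := Int.eq_ofNat_of_zero_le (show 0 ≤ N + m₁ by omega)
  have hAR : (A : ℝ) = N + m₁ := by exact_mod_cast hA.symm
  have hMR : (M : ℝ) = N + m₂ := by exact_mod_cast hNM
  have hβ : NonInt (α - m₁ - N) := hα'.add_int _ (-m₁ - N) (by push_cast; ring)
  have hγβ : NonInt (γ - (α - m₁ - N)) := hγα'.add_int _ (m₁ + N) (by push_cast; ring)
  have key := residue_gamma hβ hγ' hγβ N M A (by omega)
  have hg1 : NonInt (γ - 1) := hγ'.add_int _ (-1) (by push_cast; ring)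
  have hG : Real.Gamma γ = (γ - 1) * Real.Gamma (γ - 1) := by
    rw [← Real.Gamma_add_one hg1.ne_zero]
    congr 1
    ring
  have hg2 : NonInt (1 - γ) := hγ'.neg_add_int _ 1 (by push_cast; ring)
  have hG2 : Real.Gamma (2 - γ) = (1 - γ) * Real.Gamma (1 - γ) := by
    rw [← Real.Gamma_add_one hg2.ne_zero]
    congr 1
    ring
  have hg3 : NonInt (2 - γ) := hγ'.neg_add_int _ 2 (by push_cast; ring)
  have hg4 : NonInt (γ - m₂) := hγ'.add_int _ (-m₂) (by push_cast; ring)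
  have hsum : ∑ k ∈ Finset.range (M + 1).toNat,
        poch (1 - α) k * poch (α - (m₁ : ℝ)) (M.toNat - k) * (-1 : ℝ) ^ k /
          (poch (2 - γ) k * poch (γ - (m₂ : ℝ)) (M.toNat - k) *
            k.factorial * (M.toNat - k).factorial) =
      ∑ k ∈ Finset.range (M + 1).toNat,
        poch (2 - γ - (1 - α)) k * poch (γ - m₂ - (α - (m₁ : ℝ))) (M.toNat - k) *
          (-1 : ℝ) ^ (M.toNat - k) /
          (poch (2 - γ) k * poch (γ - (m₂ : ℝ)) (M.toNat - k) *
            k.factorial * (M.toNat - k).factorial) := by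
    by_cases h0 : 0 ≤ M
    · rw [show (M + 1).toNat = M.toNat + 1 by omega]
      exact kummer_sum _ _ hg3 hg4 _
    · rw [show (M + 1).toNat = 0 by omega]
      simp
  rw [hsum]
  have hLsum : pochZ (1 - α) m₁ / pochZ (2 - γ) m₂ *
      ∑ k ∈ Finset.range (N + 1).toNat,
        poch α k * poch (1 - α + (m₁ : ℝ)) (N.toNat - k) * (-1 : ℝ) ^ (N.toNat - k) /
          (poch γ k * poch (2 - γ + (m₂ : ℝ)) (N.toNat - k) *
            k.factorial * (N.toNat - k).factorial) =
      ((-1) ^ m₁ / (-1) ^ m₂ * (γ - 1)) * ∑ k ∈ Finset.range (N + 1).toNat,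
        Real.Gamma (k + (α - m₁ - N) + A) / Real.Gamma (k + (α - m₁ - N)) *
          (Real.Gamma (k - 1 + γ - M) / Real.Gamma (k + γ)) *
          ((-1) ^ (N.toNat - k) / (k.factorial * (N.toNat - k).factorial)) := by
    rw [Finset.mul_sum, Finset.mul_sum]
    apply Finset.sum_congr rfl
    intro k hk
    have hk' := Finset.mem_range.mp hk
    have hcast : ((N.toNat - k : ℕ) : ℝ) = N - k := by
      rw [Nat.cast_sub (by omega)]
      congr 1
      exact_mod_cast Int.toNat_of_nonneg (by omega : 0 ≤ N)
    have e1 : NonInt (α - m₁) := hα'.add_int _ (-m₁) (by push_cast; ring)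
    have e2 : NonInt (γ - 1 - m₂) := hγ'.add_int _ (-1 - m₂) (by push_cast; ring)
    rw [pochZ_refl hα', show 2 - γ = 1 - (γ - 1) by ring, pochZ_refl hg1, poch_gamma hα',
      poch_gamma hγ', show 1 - α + (m₁ : ℝ) = 1 - (α - m₁) by ring, poch_refl e1,
      show 1 - (γ - 1) + (m₂ : ℝ) = 1 - (γ - 1 - m₂) by ring, poch_refl e2, hcast, hAR, hMR,
      show (k : ℝ) + (α - m₁ - N) + (N + m₁) = α + k by ring,
      show (k : ℝ) + (α - m₁ - N) = α - m₁ - (N - k) by ring,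
      show (k : ℝ) - 1 + γ - (N + m₂) = γ - 1 - m₂ - (N - k) by ring,
      show (k : ℝ) + γ = γ + k by ring, hG]
    have f1 := hα'.gamma_ne
    have f2 := hg1.gamma_ne
    have f3 := e1.gamma_ne
    have f4 := e2.gamma_ne
    have f5 := (hγ'.add_int (γ + k) k (by push_cast; ring)).gamma_ne
    have f6 := (e1.add_int (α - m₁ - (N - k)) (k - N) (by push_cast; ring)).gamma_ne
    have f7 := (e2.add_int (γ - 1 - m₂ - (N - k)) (k - N) (by push_cast; ring)).gamma_ne
    have f8 := hg1.ne_zero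
    generalize (-1 : ℝ) ^ m₁ = u₁
    have f9 : (-1 : ℝ) ^ m₂ ≠ 0 := zpow_ne_zero _ (by norm_num)
    have f10 : (-1 : ℝ) ^ (N.toNat - k) ≠ 0 := pow_ne_zero _ (by norm_num)
    generalize (-1 : ℝ) ^ m₂ = u₂ at *
    generalize (-1 : ℝ) ^ (N.toNat - k) = u₃ at *
    field_simp
  have hRsum : pochZ (1 - γ) m₂ * pochZ (γ - α) (m₁ - m₂) *
      ∑ k ∈ Finset.range (M + 1).toNat,
        poch (2 - γ - (1 - α)) k * poch (γ - m₂ - (α - (m₁ : ℝ))) (M.toNat - k) *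
          (-1 : ℝ) ^ (M.toNat - k) /
          (poch (2 - γ) k * poch (γ - (m₂ : ℝ)) (M.toNat - k) *
            k.factorial * (M.toNat - k).factorial) =
      ((-1) ^ m₁ / (-1) ^ m₂ * (1 - γ)) * ∑ l ∈ Finset.range (M + 1).toNat,
        Real.Gamma (1 - γ + l + (α - m₁ - N) + A) / Real.Gamma (1 - γ + l + (α - m₁ - N)) *
          (Real.Gamma (1 - γ + l - N) / Real.Gamma (2 - γ + l)) *
          ((-1) ^ (M.toNat - l) / (l.factorial * (M.toNat - l).factorial)) := by
    rw [Finset.mul_sum, Finset.mul_sum]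
    apply Finset.sum_congr rfl
    intro k hk
    have hk' := Finset.mem_range.mp hk
    have hcast : ((M.toNat - k : ℕ) : ℝ) = N + m₂ - k := by
      rw [Nat.cast_sub (by omega), ← hMR]
      congr 1
      exact_mod_cast Int.toNat_of_nonneg (by omega : 0 ≤ M)
    have e0 : NonInt (1 - γ + α) := hγα'.neg_add_int _ 1 (by push_cast; ring)
    have e1 : NonInt (1 - γ + α - m₁ + m₂) := e0.add_int _ (-m₁ + m₂) (by push_cast; ring)
    have e2 : NonInt (1 - γ + m₂) := hg2.add_int _ m₂ (by push_cast; ring)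
    rw [pochZ_gamma hg2, show γ - α = 1 - (1 - γ + α) by ring, pochZ_refl e0,
      show 2 - γ - (1 - α) = 1 - γ + α by ring, poch_gamma e0, poch_gamma hg3,
      show γ - m₂ - (α - (m₁ : ℝ)) = 1 - (1 - γ + α - m₁ + m₂) by ring, poch_refl e1,
      show γ - (m₂ : ℝ) = 1 - (1 - γ + m₂) by ring, poch_refl e2, hcast, hAR,
      show 1 - γ + (k : ℝ) + (α - m₁ - N) + (N + m₁) = 1 - γ + α + k by ring,
      show 1 - γ + (k : ℝ) + (α - m₁ - N) = 1 - γ + α - m₁ + m₂ - (N + m₂ - k) by ring,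
      show 1 - γ + (k : ℝ) - N = 1 - γ + m₂ - (N + m₂ - k) by ring, hG2,
      zpow_sub₀ (by norm_num : (-1 : ℝ) ≠ 0)]
    rw [show 1 - γ + α - ((m₁ - m₂ : ℤ) : ℝ) = 1 - γ + α - m₁ + m₂ by push_cast; ring]
    have f1 := e0.gamma_ne
    have f2 := hg2.gamma_ne
    have f3 := e1.gamma_ne
    have f4 := e2.gamma_ne
    have f5 := (hg3.add_int (2 - γ + k) k (by push_cast; ring)).gamma_ne
    have f6 := (e1.add_int (1 - γ + α - m₁ + m₂ - (N + m₂ - k)) (k - N - m₂)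
      (by push_cast; ring)).gamma_ne
    have f7 := (e2.add_int (1 - γ + m₂ - (N + m₂ - k)) (k - N - m₂) (by push_cast; ring)).gamma_ne
    have f8 := hg2.ne_zero
    generalize (-1 : ℝ) ^ m₁ = u₁
    have f9 : (-1 : ℝ) ^ m₂ ≠ 0 := zpow_ne_zero _ (by norm_num)
    have f10 : (-1 : ℝ) ^ (M.toNat - k) ≠ 0 := pow_ne_zero _ (by norm_num)
    generalize (-1 : ℝ) ^ m₂ = u₂ at *
    generalize (-1 : ℝ) ^ (M.toNat - k) = u₃ at *
    field_simp
  rw [hLsum, hRsum]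
  linear_combination ((-1) ^ m₁ / (-1) ^ m₂ * (γ - 1)) * key
end

section
/- Let α, γ be real numbers with γ not an integer. Then for all real t: ( (γ−α−2)(γ−α−1) t / ( (1−γ)(2−γ) ) ) · ₁F₁(α; γ; t) · ₁F₁(−α; 3−γ; −t) + α · ₁F₁(1−α; 2−γ; −t) · ₁F₁(α+1; γ−1; t) = α + t. (Here (γ−α−2)₂ = (γ−α−2)(γ−α−1) and (1−γ)₂ = (1−γ)(2−γ).) -/
open Finset

/-- `f` is the sum of the everywhere convergent power series with coefficients `c`. -/
def HS (c : ℕ → ℝ) (f : ℝ → ℝ) : Prop := ∀ t, HasSum (fun n => c n * t ^ n) (f t)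

/-- Coefficients of `t * f t`. -/
def shiftC (c : ℕ → ℝ) : ℕ → ℝ
  | 0 => 0
  | n + 1 => c n

/-- Coefficients of the derivative. -/
def derC (c : ℕ → ℝ) (n : ℕ) : ℝ := (n + 1) * c (n + 1)

lemma HS.add {c d f g} (h : HS c f) (k : HS d g) :
    HS (fun n => c n + d n) (fun t => f t + g t) := by
  intro t
  simpa [add_mul] using (h t).add (k t)

lemma HS.smul {c f} (r : ℝ) (h : HS c f) : HS (fun n => r * c n) (fun t => r * f t) := by
  intro t
  simpa [mul_assoc] using (h t).mul_left r

lemma HS.shift {c f} (h : HS c f) : HS (shiftC c) (fun t => t * f t) := by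
  intro t
  rw [← hasSum_nat_add_iff' 1]
  have := (h t).mul_left t
  simp only [sum_range_one, shiftC, zero_mul, sub_zero]
  refine this.congr_fun ?_ |> id
  intro n
  ring

lemma HS.uniq {c d f g} (h : HS c f) (k : HS d g) (e : ∀ n, c n = d n) (t : ℝ) : f t = g t := by
  obtain rfl : c = d := funext e
  exact (h t).unique (k t)

lemma HS.zero {c f} (h : HS c f) : f 0 = c 0 := by
  have h1 := h 0
  have h2 := hasSum_single (f := fun n => c n * (0 : ℝ) ^ n) 0 (by
    intro n hn; simp [hn])
  simpa using h1.unique h2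

lemma HS.bound {c f} (h : HS c f) (R : ℝ) (hR : 1 ≤ R) :
    Summable (fun n : ℕ => (n : ℝ) * |c n| * R ^ (n - 1)) := by
  have h1 : Summable (fun n => |c n * (2 * R) ^ n|) := (h (2 * R)).summable.abs
  refine Summable.of_nonneg_of_le (fun n => by positivity) (fun n => ?_) h1
  rw [abs_mul, abs_of_nonneg (by positivity : (0:ℝ) ≤ (2 * R) ^ n), mul_pow]
  have e1 : (n : ℝ) ≤ 2 ^ n := by exact_mod_cast (Nat.lt_two_pow_self (n := n)).le
  have e2 : R ^ (n - 1) ≤ R ^ n := pow_le_pow_right₀ hR (Nat.sub_le _ _)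
  have e3 : (n : ℝ) * R ^ (n - 1) ≤ 2 ^ n * R ^ n := by gcongr
  nlinarith [abs_nonneg (c n)]

lemma HS.der {c f} (h : HS c f) : HS (derC c) (deriv f) ∧ ∀ t, HasDerivAt f (deriv f t) t := by
  have key : ∀ t, HasDerivAt f (∑' n : ℕ, (n : ℝ) * c n * t ^ (n - 1)) t ∧
      Summable (fun n : ℕ => (n : ℝ) * c n * t ^ (n - 1)) := by
    intro t
    have hR : (1 : ℝ) ≤ |t| + 1 := by linarith [abs_nonneg t]
    have hb := h.bound (|t| + 1) hR
    have hle : ∀ (n : ℕ) (y : ℝ), y ∈ Metric.ball (0 : ℝ) (|t| + 1) →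
        ‖(n : ℝ) * c n * y ^ (n - 1)‖ ≤ (n : ℝ) * |c n| * (|t| + 1) ^ (n - 1) := by
      intro n y hy
      have hy' : |y| ≤ |t| + 1 := by
        have := mem_ball_zero_iff.1 hy
        exact this.le
      rw [norm_mul, norm_mul, norm_pow, Real.norm_eq_abs, Real.norm_eq_abs, Real.norm_eq_abs,
        Nat.abs_cast]
      gcongr
    have ht : t ∈ Metric.ball (0 : ℝ) (|t| + 1) := by
      simp
    constructor
    · have := hasDerivAt_tsum_of_isPreconnected (g := fun (n : ℕ) y => c n * y ^ n)
        (g' := fun (n : ℕ) y => (n : ℝ) * c n * y ^ (n - 1)) hb Metric.isOpen_ball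
        (convex_ball (0 : ℝ) (|t| + 1)).isPreconnected
        (fun n y _ => by
          have := (hasDerivAt_pow n y).const_mul (c n)
          exact this.congr_deriv (by ring)) hle ht (h t).summable ht
      have hf : f = fun z => ∑' n : ℕ, c n * z ^ n := funext fun z => (h z).tsum_eq.symm
      rw [hf]; exact this
    · exact Summable.of_norm_bounded hb (fun n => hle n t ht)
  have hd : ∀ t, HasDerivAt f (deriv f t) t := fun t => (key t).1.differentiableAt.hasDerivAt
  refine ⟨fun t => ?_, hd⟩
  have h1 := (key t).2.hasSum
  rw [← (key t).1.deriv, ← hasSum_nat_add_iff' 1] at h1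
  simpa [derC] using h1

/-- Coefficients of `F11 a b (s * t)`. -/
noncomputable def kc (s a b : ℝ) (n : ℕ) : ℝ := poch a n * s ^ n / (poch b n * n.factorial)

lemma poch_left (a : ℝ) (n : ℕ) : a * poch (a + 1) n = poch a n * (a + n) := by
  induction n with
  | zero => simp [poch_zero]
  | succ n ih =>
    rw [poch_succ, ← mul_assoc, ih, poch_succ]; push_cast; ring

lemma poch_ne (b : ℝ) (hb : ∀ n : ℕ, b + n ≠ 0) (n : ℕ) : poch b n ≠ 0 := by
  induction n with
  | zero => simp [poch_zero]
  | succ n ih => rw [poch_succ]; exact mul_ne_zero ih (hb n)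

lemma kc_zero (s a b : ℝ) : kc s a b 0 = 1 := by simp [kc, poch_zero]

lemma kc_succ (s a b : ℝ) (hb : ∀ n : ℕ, b + n ≠ 0) (n : ℕ) :
    kc s a b (n + 1) = kc s a b n * (s * (a + n) / ((b + n) * (n + 1))) := by
  have := hb n
  have := poch_ne b hb n
  have : (n.factorial : ℝ) ≠ 0 := by positivity
  have : (n + 1 : ℝ) ≠ 0 := by positivity
  simp only [kc, poch_succ, Nat.factorial_succ]
  push_cast
  field_simp
  ring

lemma HS_F11 (s a b : ℝ) (hb : ∀ n : ℕ, b + n ≠ 0) :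
    HS (kc s a b) (fun t => F11 a b (s * t)) := by
  intro t
  have hs : Summable (fun n => kc s a b n * t ^ n) := by
    refine summable_of_ratio_norm_eventually_le (r := 1 / 2) (by norm_num) ?_
    filter_upwards [Filter.eventually_ge_atTop (⌈|a| + 2 * |b| + 8 * |s * t| + 1⌉₊)] with n hn
    have hn' : |a| + 2 * |b| + 8 * |s * t| + 1 ≤ n := (Nat.le_ceil _).trans (by exact_mod_cast hn)
    have p1 := abs_nonneg a
    have p2 := abs_nonneg b
    have p3 := abs_nonneg (s * t)
    have e : kc s a b (n + 1) * t ^ (n + 1) =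
        ((s * t) * (a + n) / ((b + n) * (n + 1))) * (kc s a b n * t ^ n) := by
      rw [kc_succ s a b hb]; ring
    rw [e, norm_mul]
    refine mul_le_mul_of_nonneg_right ?_ (norm_nonneg _)
    have q1 : |a + n| ≤ 2 * n := by
      rw [abs_le]; constructor <;> linarith [neg_abs_le a, le_abs_self a]
    have q2 : (n : ℝ) / 2 ≤ b + n := by linarith [neg_abs_le b]
    have q3 : (0 : ℝ) < b + n := by linarith
    rw [norm_div, norm_mul, Real.norm_eq_abs, Real.norm_eq_abs, Real.norm_eq_abs,
      abs_of_pos (by positivity : (0:ℝ) < (b + n) * (n + 1)), div_le_iff₀ (by positivity)]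
    have r1 : |s * t| * |a + n| ≤ |s * t| * (2 * n) := by gcongr
    have r2 : (n : ℝ) / 2 * (n + 1) ≤ (b + n) * (n + 1) := by gcongr
    nlinarith
  have := hs.hasSum
  convert this using 1
  unfold F11
  refine tsum_congr fun n => ?_
  rw [kc, mul_pow]; ring

theorem Kummer_example5 (α γ : ℝ) (hγ : ∀ k : ℤ, γ ≠ (k : ℝ)) (t : ℝ) :
    (γ - α - 2) * (γ - α - 1) * t / ((1 - γ) * (2 - γ)) *
        F11 α γ t * F11 (-α) (3 - γ) (-t) +
      α * F11 (1 - α) (2 - γ) (-t) * F11 (α + 1) (γ - 1) t = α + t := by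
  have n1 : ∀ n : ℕ, γ + n ≠ 0 := fun n h => hγ (-n) (by push_cast; linarith)
  have n2 : ∀ n : ℕ, γ - 1 + n ≠ 0 := fun n h => hγ (1 - n) (by push_cast; linarith)
  have n3 : ∀ n : ℕ, 2 - γ + n ≠ 0 := fun n h => hγ (2 + n) (by push_cast; linarith)
  have n4 : ∀ n : ℕ, 3 - γ + n ≠ 0 := fun n h => hγ (3 + n) (by push_cast; linarith)
  have g1 : 1 - γ ≠ 0 := fun h => hγ 1 (by push_cast; linarith)
  have g1' : γ - 1 ≠ 0 := fun h => hγ 1 (by push_cast; linarith)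
  have g2 : 2 - γ ≠ 0 := fun h => hγ 2 (by push_cast; linarith)
  have hA := HS_F11 1 (α + 1) (γ - 1) n2
  have hB := HS_F11 1 α γ n1
  have hC := HS_F11 (-1) (1 - α) (2 - γ) n3
  have hD := HS_F11 (-1) (-α) (3 - γ) n4
  simp only [one_mul, neg_one_mul] at hA hB hC hD
  set A : ℝ → ℝ := fun t => F11 (α + 1) (γ - 1) t
  set B : ℝ → ℝ := fun t => F11 α γ t
  set C : ℝ → ℝ := fun t => F11 (1 - α) (2 - γ) (-t)
  set D : ℝ → ℝ := fun t => F11 (-α) (3 - γ) (-t)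
  change (γ - α - 2) * (γ - α - 1) * t / ((1 - γ) * (2 - γ)) * B t * D t + α * C t * A t = α + t
  obtain ⟨hB1, dB⟩ := hB.der
  obtain ⟨hB2, dB1⟩ := hB1.der
  obtain ⟨hC1, dC⟩ := hC.der
  obtain ⟨hC2, dC1⟩ := hC1.der
  have odeB : ∀ t, t * deriv (deriv B) t + γ * deriv B t = t * deriv B t + α * B t := by
    intro t
    refine HS.uniq (hB2.shift.add (hB1.smul γ))
      (hB1.shift.add (hB.smul α)) (fun n => ?_) t
    rcases n with _ | n
    · have := n1 0
      have := n1 1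
      simp only [shiftC, derC, kc_succ _ _ _ n1, kc_zero] at *
      push_cast at *
      simp only [add_zero] at *
      field_simp
    · have := n1 n
      have := n1 (n + 1)
      have : (n + 1 : ℝ) ≠ 0 := by positivity
      have : (n + 1 + 1 : ℝ) ≠ 0 := by positivity
      simp only [shiftC, derC, kc_succ _ _ _ n1] at *
      push_cast at *
      field_simp
      ring
  have odeC : ∀ t, t * deriv (deriv C) t + (2 - γ) * deriv C t =
      (-1) * (t * deriv C t) + (α - 1) * C t := by
    intro t
    refine HS.uniq (hC2.shift.add (hC1.smul (2 - γ)))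
      ((hC1.shift.smul (-1)).add (hC.smul (α - 1))) (fun n => ?_) t
    rcases n with _ | n
    · have := n3 0
      simp only [shiftC, derC, kc_succ _ _ _ n3, kc_zero] at *
      push_cast at *
      simp only [add_zero] at *
      field_simp
      ring
    · have := n3 n
      have := n3 (n + 1)
      have : (n + 1 : ℝ) ≠ 0 := by positivity
      have : (n + 1 + 1 : ℝ) ≠ 0 := by positivity
      simp only [shiftC, derC, kc_succ _ _ _ n3] at *
      push_cast at *
      field_simp
      ring
  have relD : ∀ t, (γ - α - 2) * (γ - α - 1) / (2 - γ) * D t =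
      ((2 * α + 1 - γ) * C t + t * C t) + (α * deriv C t + t * deriv C t) := by
    intro t
    refine HS.uniq (hD.smul _)
      (((hC.smul (2 * α + 1 - γ)).add hC.shift).add ((hC1.smul α).add hC1.shift)) (fun n => ?_) t
    rcases n with _ | n
    · simp only [shiftC, derC, kc_succ _ _ _ n3, kc_zero]
      push_cast
      simp only [add_zero]
      field_simp
      ring
    · have := n3 n
      have := n3 (n + 1)
      have hn1 : (n + 1 : ℝ) ≠ 0 := by positivity
      have : (n + 1 + 1 : ℝ) ≠ 0 := by positivity
      have hk : kc (-1) (-α) (3 - γ) (n + 1) =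
          kc (-1) (1 - α) (2 - γ) n * (α * (2 - γ) / ((2 - γ + n) * (2 - γ + (n + 1)) * (n + 1))) := by
        have e1 : poch (-α) (n + 1) = -α * poch (1 - α) n := by
          rw [poch_succ, ← poch_left, neg_add_eq_sub]
        have e2 : (2 - γ) * poch (3 - γ) (n + 1) =
            poch (2 - γ) n * (2 - γ + n) * (2 - γ + (n + 1)) := by
          have := poch_left (2 - γ) (n + 1)
          rw [show 2 - γ + 1 = 3 - γ by ring, poch_succ (2 - γ)] at this
          push_cast at this; exact this
        have e3 : poch (3 - γ) (n + 1) =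
            poch (2 - γ) n * (2 - γ + n) * (2 - γ + (n + 1)) / (2 - γ) := by
          rw [← e2]; field_simp
        have := poch_ne _ n3 n
        have : (n.factorial : ℝ) ≠ 0 := by positivity
        simp only [kc, e1, e3, Nat.factorial_succ, pow_succ]
        push_cast at *
        field_simp
      rw [hk]
      simp only [shiftC, derC, kc_succ _ _ _ n3] at *
      push_cast at *
      field_simp
      ring
  have relA : ∀ t, (γ - 1) * α * A t =
      (t * (t * deriv B t) + α * (t * deriv B t)) + (α * (t * B t) + α * (γ - 1) * B t) := by
    intro t
    refine HS.uniq (hA.smul _)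
      ((hB1.shift.shift.add (hB1.shift.smul α)).add
      ((hB.shift.smul α).add (hB.smul (α * (γ - 1))))) (fun n => ?_) t
    have hk : ∀ n, (γ - 1) * α * kc 1 (α + 1) (γ - 1) n =
        kc 1 α γ n * (α + n) * (γ - 1 + n) := by
      intro n
      have e1 := poch_left α n
      have e2 := poch_left (γ - 1) n
      rw [sub_add_cancel] at e2
      have := poch_ne _ n1 n
      have := poch_ne _ n2 n
      have : (n.factorial : ℝ) ≠ 0 := by positivity
      simp only [kc, one_pow, mul_one]
      field_simp
      linear_combination (γ - 1) * poch γ n * e1 + poch α n * (α + n) * e2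
    rw [hk]
    rcases n with _ | _ | n
    · simp only [shiftC, kc_zero]
      push_cast
      ring
    · have := n1 0
      simp only [shiftC, derC, kc_succ _ _ _ n1, kc_zero] at *
      push_cast at *
      simp only [add_zero] at *
      field_simp
      ring
    · have := n1 n
      have := n1 (n + 1)
      have : (n + 1 : ℝ) ≠ 0 := by positivity
      have : (n + 1 + 1 : ℝ) ≠ 0 := by positivity
      simp only [shiftC, derC, kc_succ _ _ _ n1] at *
      push_cast at *
      field_simp
      ring
  have hM : B t * ((1 - γ + t) * C t + t * deriv C t) - t * deriv B t * C t = 1 - γ := by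
    have hd : ∀ t, HasDerivAt (fun t => B t * ((1 - γ + t) * C t + t * deriv C t)
        - t * deriv B t * C t) 0 t := by
      intro t
      have i := hasDerivAt_id' t
      have := ((dB t).mul (((i.const_add (1 - γ)).mul (dC t)).add (i.mul (dC1 t)))).sub
        ((i.mul (dB1 t)).mul (dC t))
      refine this.congr_deriv ?_
      simp only [Pi.mul_apply, Pi.add_apply]
      linear_combination B t * odeC t - C t * odeB t
    have := is_const_of_deriv_eq_zero (fun t => (hd t).differentiableAt)
      (fun t => (hd t).deriv) t 0
    rw [this, hB.zero, hC.zero]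
    simp [kc_zero]
  have hA' := relA t
  have hD' := relD t
  have hA2 : α * A t = ((t * (t * deriv B t) + α * (t * deriv B t)) +
      (α * (t * B t) + α * (γ - 1) * B t)) / (γ - 1) := by
    rw [← hA']; field_simp
  have e : (γ - α - 2) * (γ - α - 1) * t / ((1 - γ) * (2 - γ)) * B t * D t + α * C t * A t
     = t / (1 - γ) * B t * ((γ - α - 2) * (γ - α - 1) / (2 - γ) * D t) + C t * (α * A t) := by
    field_simp
  rw [e, hD', hA2]
  have : (1 - γ) * (α + t) = (α + t) * (1 - γ) := by ring
  rw [← sub_eq_zero]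
  have h3 : (γ - 1) = -(1 - γ) := by ring
  rw [show ∀ x : ℝ, x / (γ - 1) = -(x / (1 - γ)) by intro x; rw [h3, div_neg]]
  field_simp
  linear_combination (α + t) * hM
end
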